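/- arXiv:2506.12903 — 3 statements merged into one kernel-verified Lean document; each statement's English description precedes it below -/
import Mathlib

section
/- Fix ρ > 0 and define the Variational Factor VF(z) = ρ · √(z/3) · sinh((1/3) · arcsinh((3/ρ) √(3/z))) for z > 0. Then VF(z) < 1 for every z > 0. -/
/-!
Put `a = ρ √(z/3)` and `y = (3/ρ) √(3/z)`, so that `a y = 3`, and let `s = sinh (arsinh y / 3) > 0`.
The triple-angle formula for `sinh` gives `y = 4 s³ + 3 s`, hence
`VF z = a s = 1 - (4/3) a s³ < 1`.
-/

open Real

/-- The Variational Factor `VF z = ρ √(z/3) sinh((1/3) arcsinh((3/ρ) √(3/z)))`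
satisfies `VF z < 1` for every `z > 0`. -/
theorem stmt_9 (ρ : ℝ) (hρ : 0 < ρ) :
    ∀ z : ℝ, 0 < z →
      ρ * Real.sqrt (z / 3) *
          Real.sinh ((1 / 3) * Real.arsinh ((3 / ρ) * Real.sqrt (3 / z))) < 1 := by
  intro z hz
  have ha : 0 < ρ * √(z / 3) := by positivity
  have hy : 0 < (3 / ρ) * √(3 / z) := by positivity
  have hay : ρ * √(z / 3) * ((3 / ρ) * √(3 / z)) = 3 := by
    have h : √(z / 3) * √(3 / z) = 1 := by
      rw [← Real.sqrt_mul (by positivity), div_mul_div_comm, mul_comm z 3,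
        div_self (by positivity), Real.sqrt_one]
    calc ρ * √(z / 3) * ((3 / ρ) * √(3 / z))
        = 3 * (ρ / ρ) * (√(z / 3) * √(3 / z)) := by ring
      _ = 3 := by rw [h, div_self hρ.ne']; norm_num
  generalize ρ * √(z / 3) = a at *
  generalize (3 / ρ) * √(3 / z) = y at *
  have hs : 0 < sinh (1 / 3 * arsinh y) := by
    rw [Real.sinh_pos_iff]
    have := Real.arsinh_pos_iff.mpr hy
    positivity
  have h3 := Real.sinh_three_mul (1 / 3 * arsinh y)
  rw [show 3 * (1 / 3 * arsinh y) = arsinh y by ring, Real.sinh_arsinh] at h3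
  generalize sinh (1 / 3 * arsinh y) = s at *
  have hpos : 0 < a * s ^ 3 := by positivity
  rw [h3] at hay
  linarith
end

section
/- Fix ρ > 0 and define VF(z) = ρ · √(z/3) · sinh((1/3) · arcsinh((3/ρ) √(3/z))) for z > 0. Then VF is strictly monotonically increasing on (0, ∞). -/
/-!
By the triple-angle formula `sinh (3 x) = 4 sinh x ^ 3 + 3 sinh x`, the value `v = VF z` is positive
and solves the cubic `4 v ^ 3 = ρ ^ 2 z (1 - v)` (`vf_pos_and_cubic`); in particular `v < 1`.
For `0 < z < w`, if `VF w ≤ VF z`, then passing from `z` to `w` does not increase the left side of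
the cubic but strictly increases the right side, a contradiction.
-/

open Real

/-- The Variational Factor is a positive root `v` of `4 v ^ 3 = ρ ^ 2 z (1 - v)`. -/
lemma vf_pos_and_cubic (ρ z : ℝ) (hρ : 0 < ρ) (hz : 0 < z) :
    0 < ρ * √(z / 3) * sinh ((1 / 3) * arsinh ((3 / ρ) * √(3 / z))) ∧
    4 * (ρ * √(z / 3) * sinh ((1 / 3) * arsinh ((3 / ρ) * √(3 / z)))) ^ 3 =
      ρ ^ 2 * z * (1 - ρ * √(z / 3) * sinh ((1 / 3) * arsinh ((3 / ρ) * √(3 / z)))) := by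
  have hs := sinh_three_mul ((1 / 3) * arsinh ((3 / ρ) * √(3 / z)))
  rw [show 3 * ((1 / 3) * arsinh ((3 / ρ) * √(3 / z))) = arsinh ((3 / ρ) * √(3 / z)) by ring,
    sinh_arsinh] at hs
  have hpos : 0 < sinh ((1 / 3) * arsinh ((3 / ρ) * √(3 / z))) := by
    rw [sinh_pos_iff]
    have : 0 < arsinh ((3 / ρ) * √(3 / z)) := arsinh_pos_iff.2 (by positivity)
    positivity
  generalize sinh ((1 / 3) * arsinh ((3 / ρ) * √(3 / z))) = s at hs hpos ⊢
  have hinv : √(3 / z) = (√(z / 3))⁻¹ := by rw [← sqrt_inv, inv_div]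
  have hq : 0 < √(z / 3) := by positivity
  have hq2 : √(z / 3) ^ 2 = z / 3 := sq_sqrt (by positivity)
  rw [hinv] at hs
  generalize √(z / 3) = q at hs hq hq2 ⊢
  obtain rfl : z = 3 * q ^ 2 := by linarith
  refine ⟨by positivity, ?_⟩
  field_simp at hs
  linear_combination -ρ ^ 2 * q ^ 2 * hs

/-- The Variational Factor `VF z = ρ √(z/3) sinh((1/3) arcsinh((3/ρ) √(3/z)))`
is strictly monotonically increasing on `(0, ∞)`. -/
theorem stmt_10 (ρ : ℝ) (hρ : 0 < ρ) :
    StrictMonoOn (fun z : ℝ =>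
        ρ * Real.sqrt (z / 3) *
          Real.sinh ((1 / 3) * Real.arsinh ((3 / ρ) * Real.sqrt (3 / z))))
      (Set.Ioi (0 : ℝ)) := by
  intro z hz w hw hzw
  have hz0 : 0 < z := hz
  obtain ⟨hv, hvc⟩ := vf_pos_and_cubic ρ z hρ hz
  obtain ⟨hu, huc⟩ := vf_pos_and_cubic ρ w hρ hw
  beta_reduce
  generalize ρ * √(z / 3) * sinh ((1 / 3) * arsinh ((3 / ρ) * √(3 / z))) = v at hv hvc ⊢
  generalize ρ * √(w / 3) * sinh ((1 / 3) * arsinh ((3 / ρ) * √(3 / w))) = u at hu huc ⊢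
  by_contra! h
  have hv1 : 0 < 1 - v := by
    have hprod : 0 < ρ ^ 2 * z * (1 - v) := by rw [← hvc]; positivity
    exact pos_of_mul_pos_right hprod (by positivity)
  have hcube : u ^ 3 ≤ v ^ 3 := by gcongr
  have hstrict : ρ ^ 2 * z * (1 - v) < ρ ^ 2 * w * (1 - v) := by gcongr
  have hle : ρ ^ 2 * w * (1 - v) ≤ ρ ^ 2 * w * (1 - u) := by
    have hw0 : 0 < w := hw
    gcongr
  linarith
end

section
/- Fix ρ > 0 and z > 0, let w = (3/ρ) √(3/z) and x = (1/3) arcsinh(w). Then VF(z) := ρ √(z/3) sinh(x) admits the closed form VF(z) = 1 / (1 + (4/3) sinh²(x)) = 3 sinh(x) / (3 sinh(x) + 4 sinh³(x)). -/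
/-!
The triple-angle formula at `3 x = arsinh w` gives `w = 4 sinh³ x + 3 sinh x`, while
`ρ √(z/3) · w = 3` since the two square roots are inverse to each other. Eliminating `w`
gives `ρ √(z/3) (4 sinh³ x + 3 sinh x) = 3`, and both closed forms follow by dividing.
-/

open Real

/-- Closed form for the Variational Factor: with `w = (3/ρ) √(3/z)` and
`x = (1/3) arcsinh w`, one has
`VF z = ρ √(z/3) sinh x = 1 / (1 + (4/3) sinh² x) = 3 sinh x / (3 sinh x + 4 sinh³ x)`. -/
theorem stmt_12 (ρ z : ℝ) (hρ : 0 < ρ) (hz : 0 < z) :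
    let w : ℝ := (3 / ρ) * Real.sqrt (3 / z)
    let x : ℝ := (1 / 3) * Real.arsinh w
    ρ * Real.sqrt (z / 3) * Real.sinh x = 1 / (1 + (4 / 3) * Real.sinh x ^ 2) ∧
    ρ * Real.sqrt (z / 3) * Real.sinh x
      = 3 * Real.sinh x / (3 * Real.sinh x + 4 * Real.sinh x ^ 3) := by
  intro w x
  have hw : 0 < w := by positivity
  have hs : 0 < Real.sinh x := by
    rw [Real.sinh_pos_iff]
    exact mul_pos (by norm_num) (Real.arsinh_pos_iff.mpr hw)
  have hw3 : w = 4 * Real.sinh x ^ 3 + 3 * Real.sinh x := by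
    rw [← Real.sinh_three_mul, show 3 * x = Real.arsinh w by simp only [x]; ring,
      Real.sinh_arsinh]
  have hcw : ρ * Real.sqrt (z / 3) * w = 3 := by
    have hsqrt : Real.sqrt (z / 3) * Real.sqrt (3 / z) = 1 := by
      rw [← Real.sqrt_mul (by positivity), show z / 3 * (3 / z) = 1 by field_simp,
        Real.sqrt_one]
    calc ρ * Real.sqrt (z / 3) * w
        = ρ * (3 / ρ) * (Real.sqrt (z / 3) * Real.sqrt (3 / z)) := by simp only [w]; ring
      _ = 3 := by rw [hsqrt]; field_simp
  -- With `c = ρ √(z/3)` and `s = sinh x`, both claims are rearrangements of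
  -- `c * (4 s³ + 3 s) = 3`, the denominators being positive because `s > 0`.
  rw [hw3] at hcw
  constructor
  · rw [eq_div_iff (by positivity)]
    linear_combination hcw / 3
  · rw [eq_div_iff (by positivity)]
    linear_combination Real.sinh x * hcw
end
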